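/- Let M be a frame matroid of a linear biased graph Ω = (G,𝒞), v ∈ V(G) with degree at most 2κ, and let 𝓑 = (B_1,…,B_κ) be a sequence of pairwise disjoint bases partitioning E(G). Then there exists a sequence 𝓑′ = (B_1′,…,B_κ′) of pairwise disjoint bases obtained from 𝓑 by a sequence of symmetric exchanges such that every base B_j′ contains at most two edges incident with v. -/

import Mathlib

open Finset
open scoped symmDiff Classical

/-- A multigraph: each edge carries an unordered pair of endpoints. -/
structure Multigraph (V : Type*) (E : Type*) where
  ends : E → Sym2 V

namespace Multigraph

variable {V E : Type*} (G : Multigraph V E)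

/-- Edge `e` is incident with vertex `w`. -/
def Inc (e : E) (w : V) : Prop := w ∈ G.ends e

/-- `e` is a loop. -/
def IsLoopEdge (e : E) : Prop := (G.ends e).IsDiag

/-- Multiplicity of a vertex in an edge: `2` for a loop at the vertex, `1` if incident,
`0` otherwise. -/
noncomputable def mult (e : E) (w : V) : ℕ :=
  if G.ends e = Sym2.diag w then 2 else if w ∈ G.ends e then 1 else 0

/-- Degree of `w` with respect to the edge set `A` (loops counted twice). -/
noncomputable def deg (A : Finset E) (w : V) : ℕ := ∑ e ∈ A, G.mult e w

/-- Two edges of `A` sharing a vertex. -/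
def AdjIn (A : Finset E) (e f : E) : Prop :=
  e ∈ A ∧ f ∈ A ∧ ∃ w, G.Inc e w ∧ G.Inc f w

/-- The edge set `A` induces a connected subgraph. -/
def EdgeConnected (A : Finset E) : Prop :=
  ∀ e ∈ A, ∀ f ∈ A, Relation.ReflTransGen (G.AdjIn A) e f

/-- `A` is the edge set of a cycle: nonempty, connected, and every vertex has degree
`0` or `2` in `A`. -/
def IsCycle (A : Finset E) : Prop :=
  A.Nonempty ∧ G.EdgeConnected A ∧ ∀ w, G.deg A w = 0 ∨ G.deg A w = 2

/-- The set of vertices met by the edge set `A`. -/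
def Supp (A : Finset E) : Set V := { w | ∃ e ∈ A, G.Inc e w }

/-- `A` is the edge set of a path from `u` to `w`. -/
def IsPath (A : Finset E) (u w : V) : Prop :=
  u ≠ w ∧ G.EdgeConnected A ∧ G.deg A u = 1 ∧ G.deg A w = 1 ∧
    ∀ x, x ≠ u → x ≠ w → (G.deg A x = 0 ∨ G.deg A x = 2)

/-- Vertices joined by a walk using edges of `A`. -/
def Reach (A : Finset E) (a b : V) : Prop :=
  Relation.ReflTransGen (fun x y => ∃ e ∈ A, G.Inc e x ∧ G.Inc e y) a b

/-- `T` is a spanning tree: every pair of vertices is joined by `T` and `T` contains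
no cycle. -/
def IsSpanningTree (T : Finset E) : Prop :=
  (∀ a b : V, G.Reach T a b) ∧ ∀ C ⊆ T, ¬ G.IsCycle C

/-- `C` is the fundamental cycle of the edge `e` with respect to the spanning tree `T`. -/
def IsFundCycle (T : Finset E) (e : E) (C : Finset E) : Prop :=
  G.IsCycle C ∧ e ∈ C ∧ C ⊆ insert e T

end Multigraph

/-- Symmetric difference of a list of finsets. -/
def listSymmDiff {E : Type*} [DecidableEq E] (L : List (Finset E)) : Finset E :=
  L.foldr (· ∆ ·) ∅

/-- A linear biased graph: a multigraph together with a class `Bal` of *balanced* cycles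
satisfying the theta property and closed under taking cycles that are symmetric
differences of balanced cycles. -/
structure LinearBiasedGraph (V E : Type*) [DecidableEq E] where
  G : Multigraph V E
  Bal : Set (Finset E)
  bal_cycle : ∀ C ∈ Bal, G.IsCycle C
  theta : ∀ C₁ C₂ C₃ : Finset E, G.IsCycle C₁ → G.IsCycle C₂ → G.IsCycle C₃ →
    C₃ = C₁ ∆ C₂ → C₁ ∈ Bal → C₂ ∈ Bal → C₃ ∈ Bal
  linear : ∀ L : List (Finset E), (∀ D ∈ L, D ∈ Bal) →
    ∀ C : Finset E, G.IsCycle C → C = listSymmDiff L → C ∈ Bal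

namespace LinearBiasedGraph

variable {V E : Type*} [DecidableEq E] (Ω : LinearBiasedGraph V E)

/-- Independent sets of the frame matroid `M(Ω)`: edge sets containing no balanced cycle
and no two distinct cycles lying in a common component. -/
def FrameIndep (A : Finset E) : Prop :=
  (∀ C ⊆ A, Ω.G.IsCycle C → C ∉ Ω.Bal) ∧
  ∀ C₁ C₂ : Finset E, C₁ ⊆ A → C₂ ⊆ A → Ω.G.IsCycle C₁ → Ω.G.IsCycle C₂ → C₁ ≠ C₂ →
    ∀ e₁ ∈ C₁, ∀ e₂ ∈ C₂, ¬ Relation.ReflTransGen (Ω.G.AdjIn A) e₁ e₂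

/-- Bases of the frame matroid `M(Ω)`: maximal independent sets. -/
def FrameBase (B : Finset E) : Prop :=
  Ω.FrameIndep B ∧ ∀ A : Finset E, Ω.FrameIndep A → B ⊆ A → A = B

/-- Circuits of the frame matroid `M(Ω)`: minimal dependent sets. -/
def FrameCircuit (C : Finset E) : Prop :=
  ¬ Ω.FrameIndep C ∧ ∀ C' ⊂ C, Ω.FrameIndep C'

variable {κ : ℕ}

/-- A single symmetric exchange between two members of a sequence of bases. -/
def SymExchStep (𝓑 𝓑' : Fin κ → Finset E) : Prop :=
  ∃ i j : Fin κ, i ≠ j ∧ ∃ e ∈ 𝓑 i, ∃ f ∈ 𝓑 j,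
    Ω.FrameBase (insert f (𝓑 i \ {e})) ∧ Ω.FrameBase (insert e (𝓑 j \ {f})) ∧
    𝓑' i = insert f (𝓑 i \ {e}) ∧ 𝓑' j = insert e (𝓑 j \ {f}) ∧
    ∀ t : Fin κ, t ≠ i → t ≠ j → 𝓑' t = 𝓑 t

/-- `𝓑'` is obtained from `𝓑` by a finite sequence of symmetric exchanges. -/
def ExchReachable (𝓑 𝓑' : Fin κ → Finset E) : Prop :=
  Relation.ReflTransGen Ω.SymExchStep 𝓑 𝓑'

end LinearBiasedGraph

namespace VRed

open Multigraph

set_option linter.unusedSectionVars false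

section Gain

variable {V E : Type*} [DecidableEq E] (G : Multigraph V E) {Q : Type*} [AddCommGroup Q]
  (π : E → Q)

/-- The generalized potential `p` is compatible with the edge `e`. -/
def Sat (p : V → WithTop Q) (e : E) : Prop :=
  ∀ a b, G.ends e = s(a, b) → p a = p b + (π e : WithTop Q)

/-- `p` is compatible with all edges of `A`. -/
def Sol (A : Finset E) (p : V → WithTop Q) : Prop := ∀ e ∈ A, Sat G π p e

/-- Closure operator of the frame matroid. -/
def Cl (A : Finset E) (e : E) : Prop := ∀ p, Sol G π A p → Sat G π p e

/-- Independence with respect to the closure operator. -/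
def Ind (A : Finset E) : Prop := ∀ e ∈ A, ¬ Cl G π (A.erase e) e

/-- The edges of `A` have either both or no ends in `F`. -/
def Resp (A : Finset E) (F : V → Prop) : Prop :=
  ∀ e ∈ A, ∀ x y, G.Inc e x → G.Inc e y → F x → F y

variable {G π}

theorem exists_ends (e : E) : ∃ a b, G.ends e = s(a, b) := by
  induction h : G.ends e using Sym2.ind with
  | _ a b => exact ⟨a, b, rfl⟩

theorem inc_iff {e : E} {a b x : V} (h : G.ends e = s(a, b)) : G.Inc e x ↔ x = a ∨ x = b := by
  simp [Inc, h]

theorem exists_other {e : E} {v : V} (h : G.Inc e v) : ∃ a, G.ends e = s(v, a) := by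
  obtain ⟨a, b, hab⟩ := exists_ends (G := G) e
  rcases (inc_iff hab).1 h with rfl | rfl
  · exact ⟨_, hab⟩
  · exact ⟨a, by rw [hab, Sym2.eq_swap]⟩

theorem add_twice (h2 : ∀ q : Q, q + q = 0) (x : WithTop Q) (q : Q) :
    x + (q : WithTop Q) + (q : WithTop Q) = x := by
  rw [add_assoc, ← WithTop.coe_add, h2]; simp

theorem add_coe_inj {x y : WithTop Q} (q : Q) :
    x + (q : WithTop Q) = y + (q : WithTop Q) ↔ x = y :=
  WithTop.add_right_inj (WithTop.coe_ne_top)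

theorem add_coe_top {x : WithTop Q} (q : Q) : x + (q : WithTop Q) = ⊤ ↔ x = ⊤ := by
  simp

theorem sat_iff (h2 : ∀ q : Q, q + q = 0) {p : V → WithTop Q} {e : E} {a b : V}
    (h : G.ends e = s(a, b)) : Sat G π p e ↔ p a = p b + (π e : WithTop Q) := by
  constructor
  · intro H; exact H a b h
  · intro H x y hxy
    rw [h] at hxy
    rcases Sym2.eq_iff.1 hxy with ⟨rfl, rfl⟩ | ⟨rfl, rfl⟩
    · exact H
    · rw [H, add_twice h2]

theorem Sat.top_iff {p : V → WithTop Q} {e : E} (h : Sat G π p e) {x y : V}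
    (hx : G.Inc e x) (hy : G.Inc e y) : p x = ⊤ ↔ p y = ⊤ := by
  obtain ⟨a, hab⟩ := exists_other hx
  have := h _ _ hab
  rcases (inc_iff hab).1 hy with rfl | rfl
  · rfl
  · rw [this]; simp

theorem Sol.resp {p : V → WithTop Q} {A : Finset E} (h : Sol G π A p) :
    Resp G A (fun x => p x ≠ ⊤) := by
  intro e he x y hx hy hxx hyy
  exact hxx (((h e he).top_iff hx hy).2 hyy)

theorem Sol.mono {p : V → WithTop Q} {A B : Finset E} (h : Sol G π A p) (hB : B ⊆ A) :
    Sol G π B p := fun e he => h e (hB he)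

theorem Cl.mono {A B : Finset E} {e : E} (h : Cl G π A e) (hB : A ⊆ B) : Cl G π B e :=
  fun p hp => h p (hp.mono hB)

theorem sat_top (e : E) : Sat G π (fun _ => ⊤) e := by
  intro a b _; simp

theorem Sat.shift {p : V → WithTop Q} {e : E} (h : Sat G π p e) (t : WithTop Q) :
    Sat G π (fun x => p x + t) e := by
  intro a b hab
  simp only [h a b hab]
  rw [add_right_comm]

theorem Sol.glue {p q : V → WithTop Q} {A : Finset E} (hp : Sol G π A p) (hq : Sol G π A q)
    {F : V → Prop} [DecidablePred F] (hF : Resp G A F) :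
    Sol G π A (fun x => if F x then p x else q x) := by
  intro e he a b hab
  have ha : G.Inc e a := by simp [Inc, hab]
  have hb : G.Inc e b := by simp [Inc, hab]
  have h1 := hF e he a b ha hb
  have h2 := hF e he b a hb ha
  have h3 := hp e he a b hab
  have h4 := hq e he a b hab
  by_cases h : F a
  · simp only [h, h1 h, if_true]; exact h3
  · have : ¬ F b := fun h' => h (h2 h')
    simp only [h, this, if_false]; exact h4

theorem Reach.mono' {A B : Finset E} (h : A ⊆ B) {x y : V} (hr : G.Reach A x y) :
    G.Reach B x y := by
  induction hr with
  | refl => exact Relation.ReflTransGen.refl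
  | tail _ h' ih =>
    obtain ⟨e, he, h1⟩ := h'
    exact ih.tail ⟨e, h he, h1⟩

theorem Reach.symm' {A : Finset E} {x y : V} (hr : G.Reach A x y) : G.Reach A y x := by
  induction hr with
  | refl => exact Relation.ReflTransGen.refl
  | tail _ h ih =>
    obtain ⟨e, he, h1, h2⟩ := h
    exact Relation.ReflTransGen.head ⟨e, he, h2, h1⟩ ih

theorem reach_resp (A : Finset E) (c : V) : Resp G A (fun x => G.Reach A c x) := by
  intro e he x y hx hy h
  exact Relation.ReflTransGen.tail h ⟨e, he, hx, hy⟩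

theorem Resp.reach {A : Finset E} {F : V → Prop} (hF : Resp G A F) {x y : V}
    (h : G.Reach A x y) (hx : F x) : F y := by
  induction h with
  | refl => exact hx
  | tail _ h ih =>
    obtain ⟨e, he, h1, h2⟩ := h
    exact hF e he _ _ h1 h2 ih

theorem Sol.reach_eq {A : Finset E} {p q : V → WithTop Q} (hp : Sol G π A p) (hq : Sol G π A q)
    {c x : V} (h : G.Reach A c x) : p x + q c = p c + q x := by
  induction h with
  | refl => rfl
  | @tail y z _ h ih =>
    obtain ⟨e, he, h1, h2⟩ := h
    obtain ⟨a, hab⟩ := exists_other h2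
    have e1 := hp e he _ _ hab
    have e2 := hq e he _ _ hab
    rcases (inc_iff hab).1 h1 with rfl | rfl
    · exact ih
    · rw [e1, e2, add_right_comm, ih, add_assoc]

theorem sat_congr_shift {p q : V → WithTop Q} {e : E} {a b : V} (h2 : ∀ q : Q, q + q = 0)
    (hab : G.ends e = s(a, b)) {s t : WithTop Q} (ht : t ≠ ⊤)
    (ha : p a + s = t + q a) (hb : p b + s = t + q b) (hp : Sat G π p e) : Sat G π q e := by
  rw [sat_iff h2 hab] at hp ⊢
  have : t + q a = t + (q b + (π e : WithTop Q)) := by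
    rw [← ha, hp, ← add_assoc, ← hb, add_right_comm]
  exact (WithTop.add_left_inj ht).1 this

/-- Exchange property of the closure operator: the first half, with an orientation of `f`. -/
theorem exchange_aux (h2 : ∀ q : Q, q + q = 0) {Z : Finset E} {e f : E} {c d : V}
    (hcd : G.ends f = s(c, d)) (hcl : ∀ r, Sol G π Z r → Sat G π r f → Sat G π r e)
    {p q : V → WithTop Q} (hq : Sol G π Z q) (hqe : ¬ Sat G π q e)
    (hp : Sol G π Z p) (hpe : Sat G π p e) (hpc : p c ≠ ⊤) (hpf : ¬ Sat G π p f) : False := by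
  have htop : Sol G π Z (fun _ => ⊤) := fun e _ => sat_top e
  -- masking out both components
  have mask : ∀ r, Sol G π Z r →
      Sat G π (fun x => if G.Reach Z c x ∨ G.Reach Z d x then ⊤ else r x) e := by
    intro r hr
    apply hcl
    · refine htop.glue hr ?_
      intro e he x y hx hy h
      rcases h with h | h
      · exact Or.inl (reach_resp Z c e he x y hx hy h)
      · exact Or.inr (reach_resp Z d e he x y hx hy h)
    · rw [sat_iff h2 hcd]
      have hc : G.Reach Z c c := Relation.ReflTransGen.refl
      have hd : G.Reach Z d d := Relation.ReflTransGen.refl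
      simp [hc, hd]
  -- orientation of `e`
  have main : ∀ a b, G.ends e = s(a, b) → (G.Reach Z c a ∨ G.Reach Z d a) → False := by
    intro a b hab hKa
    have mp := (sat_iff h2 hab).1 (mask p hp)
    have mq := (sat_iff h2 hab).1 (mask q hq)
    simp only [hKa, if_true] at mp mq
    have hpe' := (sat_iff h2 hab).1 hpe
    have hqe' : ¬ (q a = q b + (π e : WithTop Q)) := fun h => hqe ((sat_iff h2 hab).2 h)
    -- glue when `p` is infinite at `d`
    have inside : ∀ k, p k ≠ ⊤ → G.Reach Z k a → G.Reach Z k b → False := by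
      intro k hk h3 h4
      have e1 := hp.reach_eq hq h3
      have e2 := hp.reach_eq hq h4
      exact hqe (sat_congr_shift h2 hab hk e1 e2 hpe)
    by_cases hda : G.Reach Z d a
    · -- `a` in component of `d`
      by_cases hpd : p d = ⊤
      · have hcd' : ¬ G.Reach Z c d := fun h => hp.resp.reach h hpc hpd
        have hpa : p a = ⊤ := by
          by_contra h; exact hp.resp.reach (Reach.symm' hda) h hpd
        have hpb : p b = ⊤ := by
          rw [hpa] at hpe'; exact (add_coe_top _).1 hpe'.symm
        have hcb : ¬ G.Reach Z c b := fun h => hp.resp.reach h hpc hpb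
        have hqa : q a ≠ ⊤ := by
          intro hqa
          apply hqe'
          by_cases hdb : G.Reach Z d b
          · have := hq.resp.reach (Relation.ReflTransGen.trans (Reach.symm' hdb) hda)
            have : q b = ⊤ := by by_contra h; exact this h hqa
            rw [hqa, this]; simp
          · simp only [hcb, hdb, or_self, if_false] at mq
            rw [hqa, mq]
        have hqd : q d ≠ ⊤ := hq.resp.reach (Reach.symm' hda) hqa
        obtain ⟨t, ht⟩ : ∃ t : Q, q d + (t : WithTop Q) = p c + (π f : WithTop Q) := by
          obtain ⟨x, hx⟩ := WithTop.ne_top_iff_exists.1 hqd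
          obtain ⟨y, hy⟩ := WithTop.ne_top_iff_exists.1 hpc
          refine ⟨-x + (y + π f), ?_⟩
          rw [← hx, ← hy, ← WithTop.coe_add, ← WithTop.coe_add]; simp
        have hr := Sol.glue hp (Sol.glue (fun e he => (hq e he).shift (t : WithTop Q)) htop
          (reach_resp Z d)) (reach_resp Z c)
        have hca : ¬ G.Reach Z c a := fun h => hp.resp.reach h hpc hpa
        have hrf := hcl _ hr (by
          rw [sat_iff h2 hcd]
          have hc : G.Reach Z c c := Relation.ReflTransGen.refl
          have hd : G.Reach Z d d := Relation.ReflTransGen.refl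
          simp only [hc, hd, hcd', if_true, if_false, ht]
          rw [add_twice h2])
        rw [sat_iff h2 hab] at hrf
        simp only [hca, hcb, hda, if_true, if_false] at hrf
        by_cases hdb : G.Reach Z d b
        · simp only [hdb, if_true] at hrf
          rw [add_right_comm, add_coe_inj] at hrf
          exact hqe' hrf
        · simp only [hdb, if_false] at hrf
          simp [hqa] at hrf
      · by_cases hdb : G.Reach Z d b
        · exact inside d hpd hda hdb
        · have hpb : p b ≠ ⊤ := by
            intro h; rw [h] at hpe'; simp at hpe'
            exact hp.resp.reach hda hpd hpe'
          by_cases hcb : G.Reach Z c b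
          · by_cases hcd' : G.Reach Z c d
            · exact inside c hpc (Relation.ReflTransGen.trans hcd' hda) hcb
            · obtain ⟨t, ht⟩ : ∃ t : Q, p d + (t : WithTop Q) = p c + (π f : WithTop Q) := by
                obtain ⟨x, hx⟩ := WithTop.ne_top_iff_exists.1 hpd
                obtain ⟨y, hy⟩ := WithTop.ne_top_iff_exists.1 hpc
                refine ⟨-x + (y + π f), ?_⟩
                rw [← hx, ← hy, ← WithTop.coe_add, ← WithTop.coe_add]; simp
              have hr := Sol.glue (fun e he => (hp e he).shift (t : WithTop Q)) hp
                (reach_resp Z d)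
              have hdc : ¬ G.Reach Z d c := fun h => hcd' (Reach.symm' h)
              have hrf := hcl _ hr (by
                rw [sat_iff h2 hcd]
                have hd : G.Reach Z d d := Relation.ReflTransGen.refl
                simp only [hd, hdc, if_true, if_false, ht]
                rw [add_twice h2])
              rw [sat_iff h2 hab] at hrf
              simp only [hda, hdb, if_true, if_false, ← hpe'] at hrf
              have ht0 : t = 0 := by
                obtain ⟨x, hx⟩ := WithTop.ne_top_iff_exists.1 (hp.resp.reach hda hpd)
                rw [← hx, ← WithTop.coe_add, WithTop.coe_inj] at hrf
                simpa using hrf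
              apply hpf
              rw [sat_iff h2 hcd]
              rw [ht0] at ht
              simp only [WithTop.coe_zero, add_zero] at ht
              rw [ht, add_twice h2]
          · simp only [hcb, hdb, or_self, if_false] at mp
            exact absurd mp.symm (by simp [hpb])
    · have hca : G.Reach Z c a := hKa.resolve_right hda
      have hpa : p a ≠ ⊤ := hp.resp.reach hca hpc
      have hpb : p b ≠ ⊤ := by
        intro h; rw [h] at hpe'; simp at hpe'
        exact hpa hpe'
      by_cases hcb : G.Reach Z c b
      · exact inside c hpc hca hcb
      · by_cases hdb : G.Reach Z d b
        · have hpd : p d ≠ ⊤ := hp.resp.reach (Reach.symm' hdb) hpb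
          have hcd' : ¬ G.Reach Z c d := fun h => hcb (Relation.ReflTransGen.trans h hdb)
          obtain ⟨t, ht⟩ : ∃ t : Q, p d + (t : WithTop Q) = p c + (π f : WithTop Q) := by
            obtain ⟨x, hx⟩ := WithTop.ne_top_iff_exists.1 hpd
            obtain ⟨y, hy⟩ := WithTop.ne_top_iff_exists.1 hpc
            refine ⟨-x + (y + π f), ?_⟩
            rw [← hx, ← hy, ← WithTop.coe_add, ← WithTop.coe_add]; simp
          have hr := Sol.glue (fun e he => (hp e he).shift (t : WithTop Q)) hp
            (reach_resp Z d)
          have hdc : ¬ G.Reach Z d c := fun h => hcd' (Reach.symm' h)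
          have hrf := hcl _ hr (by
            rw [sat_iff h2 hcd]
            have hd : G.Reach Z d d := Relation.ReflTransGen.refl
            simp only [hd, hdc, if_true, if_false, ht]
            rw [add_twice h2])
          rw [sat_iff h2 hab] at hrf
          simp only [hda, hdb, if_true, if_false] at hrf
          rw [add_right_comm, ← hpe'] at hrf
          have ht0 : t = 0 := by
            obtain ⟨x, hx⟩ := WithTop.ne_top_iff_exists.1 hpa
            rw [← hx, ← WithTop.coe_add, WithTop.coe_inj] at hrf
            simpa using hrf
          apply hpf
          rw [sat_iff h2 hcd]
          rw [ht0] at ht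
          simp only [WithTop.coe_zero, add_zero] at ht
          rw [ht, add_twice h2]
        · simp only [hcb, hdb, or_self, if_false] at mp
          exact absurd mp.symm (by simp [hpb])
  obtain ⟨a, b, hab⟩ := exists_ends (G := G) e
  by_cases ha : G.Reach Z c a ∨ G.Reach Z d a
  · exact main a b hab ha
  by_cases hb : G.Reach Z c b ∨ G.Reach Z d b
  · exact main b a (by rw [hab, Sym2.eq_swap]) hb
  have mq := (sat_iff h2 hab).1 (mask q hq)
  simp only [ha, hb, if_false] at mq
  exact hqe ((sat_iff h2 hab).2 mq)

theorem exchange (h2 : ∀ q : Q, q + q = 0) {Z : Finset E} {e f : E}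
    (h : Cl G π (insert f Z) e) (hn : ¬ Cl G π Z e) : Cl G π (insert e Z) f := by
  intro p hp
  by_contra hpf
  unfold Cl at hn
  push Not at hn
  obtain ⟨q, hq, hqe⟩ := hn
  have hcl : ∀ r, Sol G π Z r → Sat G π r f → Sat G π r e := by
    intro r hr hrf
    apply h r
    intro x hx
    rcases Finset.mem_insert.1 hx with rfl | hx
    · exact hrf
    · exact hr x hx
  have hpZ : Sol G π Z p := hp.mono (Finset.subset_insert _ _)
  have hpe := hp e (Finset.mem_insert_self _ _)
  obtain ⟨c, d, hcd⟩ := exists_ends (G := G) f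
  by_cases hc : p c = ⊤
  · by_cases hd : p d = ⊤
    · apply hpf
      rw [sat_iff h2 hcd, hc, hd]; simp
    · exact exchange_aux h2 (c := d) (d := c) (by rw [hcd, Sym2.eq_swap]) hcl hq hqe hpZ hpe hd hpf
  · exact exchange_aux h2 hcd hcl hq hqe hpZ hpe hc hpf

theorem Cl.trans {A : Finset E} {e f : E} (hf : Cl G π A f) (he : Cl G π (insert f A) e) :
    Cl G π A e := by
  intro p hp
  apply he p
  intro x hx
  rcases Finset.mem_insert.1 hx with rfl | hx
  · exact hf p hp
  · exact hp x hx

theorem Cl.of_mem {A : Finset E} {e : E} (h : e ∈ A) : Cl G π A e := fun _ hp => hp e h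

theorem Ind.subset {A B : Finset E} (h : Ind G π A) (hB : B ⊆ A) : Ind G π B :=
  fun e he hc => h e (hB he) (hc.mono (Finset.erase_subset_erase _ hB))

theorem Ind.insert (h2 : ∀ q : Q, q + q = 0) {A : Finset E} {f : E} (h : Ind G π A)
    (hf : ¬ Cl G π A f) : Ind G π (insert f A) := by
  have hfA : f ∉ A := fun h => hf (Cl.of_mem h)
  intro e he hc
  rcases Finset.mem_insert.1 he with rfl | he
  · rw [Finset.erase_insert hfA] at hc
    exact hf hc
  · have hne : f ≠ e := fun h => hfA (h ▸ he)
    rw [Finset.erase_insert_of_ne hne] at hc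
    have := exchange h2 hc (h e he)
    rw [Finset.insert_erase he] at this
    exact hf this

/-- Exchanging one element in a spanning independent set. -/
theorem base_exchange (h2 : ∀ q : Q, q + q = 0) {B : Finset E} {e f : E} (hI : Ind G π B)
    (hS : ∀ x, Cl G π B x) (he : e ∈ B) (hf : ¬ Cl G π (B \ {e}) f) :
    Ind G π (Insert.insert f (B \ {e})) ∧ ∀ x, Cl G π (Insert.insert f (B \ {e})) x := by
  refine ⟨(hI.subset Finset.sdiff_subset).insert h2 hf, ?_⟩
  have h1 : Insert.insert e (B \ {e}) = B := by
    rw [Finset.sdiff_singleton_eq_erase, Finset.insert_erase he]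
  have h3 : Cl G π (Insert.insert f (B \ {e})) e := exchange h2 (by rw [h1]; exact hS f) hf
  intro x
  refine h3.trans ((hS x).mono ?_)
  intro y hy
  by_cases hye : y = e <;> simp [hye, hy]

/-- A maximal-type pendant edge lemma: if `v` has at least three edges in an independent set. -/
theorem special (h2 : ∀ q : Q, q + q = 0) {B : Finset E} (hI : Ind G π B) {v : V}
    {e₁ e₂ e₃ : E} (m₁ : e₁ ∈ B) (m₂ : e₂ ∈ B) (m₃ : e₃ ∈ B)
    (n₁₂ : e₁ ≠ e₂) (n₁₃ : e₁ ≠ e₃) (n₂₃ : e₂ ≠ e₃)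
    {a₁ a₂ a₃ : V} (k₁ : G.ends e₁ = s(v, a₁)) (k₂ : G.ends e₂ = s(v, a₂))
    (k₃ : G.ends e₃ = s(v, a₃)) :
    ∃ e ∈ B, ∃ a, G.ends e = s(v, a) ∧ ∃ p, Sol G π (B.erase e) p ∧ p v = ⊤ ∧ p a ≠ ⊤ := by
  by_contra H
  push Not at H
  have get : ∀ e ∈ B, ∀ a, G.ends e = s(v, a) →
      ∃ p, Sol G π (B.erase e) p ∧ p v = 0 ∧ p a ≠ (π e : WithTop Q) := by
    intro e he a hea
    have := hI e he
    unfold Cl at this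
    push Not at this
    obtain ⟨p, hp, hpe⟩ := this
    have hpe' : ¬ (p v = p a + (π e : WithTop Q)) := fun h => hpe ((sat_iff h2 hea).2 h)
    have hv : p v ≠ ⊤ := by
      intro hv
      have := H e he a hea p hp hv
      apply hpe'; rw [hv, this]; simp
    obtain ⟨t, ht⟩ := WithTop.ne_top_iff_exists.1 hv
    refine ⟨fun x => p x + (t : WithTop Q), fun f hf => (hp f hf).shift _, ?_, ?_⟩
    · simp only [← ht, ← WithTop.coe_add, h2]; rfl
    · intro h
      apply hpe'
      change p a + (t : WithTop Q) = (π e : WithTop Q) at h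
      rw [← ht, ← h, ← add_assoc]
      have : p a + p a = 0 := by
        have hpa : p a ≠ ⊤ := by rintro h'; rw [h'] at h; simp at h
        obtain ⟨s, hs⟩ := WithTop.ne_top_iff_exists.1 hpa
        rw [← hs, ← WithTop.coe_add, h2]; rfl
      rw [this, zero_add]
  have val : ∀ {p : V → WithTop Q} {e : E} {a : V}, Sat G π p e → G.ends e = s(v, a) → p v = 0 →
      p a = (π e : WithTop Q) := by
    intro p e a hp hea hv
    have := hp a v (by rw [hea, Sym2.eq_swap])
    rw [this, hv, zero_add]
  obtain ⟨p₁, s₁, z₁, x₁⟩ := get e₁ m₁ a₁ k₁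
  obtain ⟨p₂, s₂, z₂, x₂⟩ := get e₂ m₂ a₂ k₂
  obtain ⟨p₃, s₃, z₃, x₃⟩ := get e₃ m₃ a₃ k₃
  have v₁₂ := val (s₁ e₂ (Finset.mem_erase.2 ⟨n₁₂.symm, m₂⟩)) k₂ z₁
  have v₁₃ := val (s₁ e₃ (Finset.mem_erase.2 ⟨n₁₃.symm, m₃⟩)) k₃ z₁
  have v₂₁ := val (s₂ e₁ (Finset.mem_erase.2 ⟨n₁₂, m₁⟩)) k₁ z₂
  have v₂₃ := val (s₂ e₃ (Finset.mem_erase.2 ⟨n₂₃.symm, m₃⟩)) k₃ z₂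
  have v₃₁ := val (s₃ e₁ (Finset.mem_erase.2 ⟨n₁₃, m₁⟩)) k₁ z₃
  have v₃₂ := val (s₃ e₂ (Finset.mem_erase.2 ⟨n₂₃, m₂⟩)) k₂ z₃
  have t₁ : p₁ a₁ = ⊤ := by
    have := H e₁ m₁ a₁ k₁ (fun x => if p₁ x ≠ p₂ x ∧ p₁ x ≠ p₃ x then p₁ x else ⊤) ?_ (by
      simp [z₁, z₂])
    · simpa [v₂₁, v₃₁, x₁] using this
    · intro f hf
      have hf1 := s₁ f hf
      obtain ⟨hfe, hfB⟩ := Finset.mem_erase.1 hf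
      by_cases hf2 : f = e₂
      · subst hf2
        rw [sat_iff h2 k₂]
        simp [z₁, z₂, v₁₂, v₃₂]
      by_cases hf3 : f = e₃
      · subst hf3
        rw [sat_iff h2 k₃]
        simp [z₁, z₂, v₁₃, v₂₃]
      have q2 := s₂ f (Finset.mem_erase.2 ⟨hf2, hfB⟩)
      have q3 := s₃ f (Finset.mem_erase.2 ⟨hf3, hfB⟩)
      intro a b hab
      have w1 := hf1 a b hab
      have w2 := q2 a b hab
      have w3 := q3 a b hab
      simp only [w1, w2, w3, ne_eq, add_coe_inj]
      split_ifs <;> simp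
  have := H e₂ m₂ a₂ k₂ (fun x => if p₁ x ≠ p₂ x then p₁ x else ⊤) ?_ (by simp [z₁, z₂])
  · simp [v₁₂, x₂.symm] at this
  · intro f hf
    obtain ⟨hfe, hfB⟩ := Finset.mem_erase.1 hf
    by_cases hf1 : f = e₁
    · subst hf1
      rw [sat_iff h2 k₁]
      simp [z₁, z₂, t₁]
    have w1 := s₁ f (Finset.mem_erase.2 ⟨hf1, hfB⟩)
    have w2 := s₂ f hf
    intro a b hab
    have w1 := w1 a b hab
    have w2 := w2 a b hab
    simp only [w1, w2, ne_eq, add_coe_inj]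
    split_ifs <;> simp

theorem exists_min_cl (h2 : ∀ q : Q, q + q = 0) {B : Finset E} (hI : Ind G π B) {e : E}
    (he : Cl G π B e) : ∃ Y ⊆ B, Cl G π Y e ∧ ∀ f ∈ Y, ¬ Cl G π (B \ {f}) e := by
  obtain ⟨Y, hYm⟩ := (B.powerset.filter (fun Y => Cl G π Y e)).exists_minimal
    ⟨B, by simp [he]⟩
  have hY := hYm.prop
  simp only [Finset.mem_filter, Finset.mem_powerset] at hY
  refine ⟨Y, hY.1, hY.2, fun f hf hc => ?_⟩
  have hn : ¬ Cl G π (Y.erase f) e := by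
    intro hc'
    have := hYm.le_of_le (y := Y.erase f) (by
      simp only [Finset.mem_filter, Finset.mem_powerset]
      exact ⟨(Finset.erase_subset _ _).trans hY.1, hc'⟩) (Finset.erase_subset _ _)
    exact Finset.notMem_erase f Y (this hf)
  have h1 : Cl G π (insert e (Y.erase f)) f :=
    exchange h2 (by rw [Finset.insert_erase hf]; exact hY.2) hn
  rw [Finset.sdiff_singleton_eq_erase] at hc
  exact hI f (hY.1 hf) (hc.trans (h1.mono
    (Finset.insert_subset_insert _ (Finset.erase_subset_erase _ hY.1))))

/-- Key exchange lemma. -/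
theorem key (h2 : ∀ q : Q, q + q = 0) {B₁ B₂ : Finset E} (hI₁ : Ind G π B₁) (hI₂ : Ind G π B₂)
    (hS₂ : ∀ x, Cl G π B₂ x) {v u : V}
    (hcard : 3 ≤ (B₁.filter fun e => G.Inc e v).card)
    {g : E} (hgv : G.ends g = s(v, u)) (huv : u ≠ v)
    (hg : ∀ f ∈ B₂, f ≠ g → ¬ G.Inc f v) :
    ∃ e ∈ B₁, G.Inc e v ∧ ∃ f ∈ B₂, f ≠ g ∧ ¬ Cl G π (B₁ \ {e}) f ∧ ¬ Cl G π (B₂ \ {f}) e := by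
  by_contra H
  push Not at H
  have claim : ∀ e ∈ B₁, G.Inc e v → ∀ p, Sol G π (B₁.erase e) p →
      Sat G π (Function.update p v (p u + (π g : WithTop Q))) e := by
    intro e he hev p hp
    obtain ⟨Y, hYB, hYe, hY⟩ := exists_min_cl h2 hI₂ (hS₂ e)
    apply hYe
    intro f hf
    by_cases hfg : f = g
    · subst hfg
      rw [sat_iff h2 hgv]
      simp [Function.update_of_ne huv]
    · have h1 : Cl G π (B₁ \ {e}) f := by
        by_contra hc
        exact hY f hf (H e he hev f (hYB hf) hfg hc)
      rw [Finset.sdiff_singleton_eq_erase] at h1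
      have h3 := h1 p hp
      have h4 := hg f (hYB hf) hfg
      intro a b hab
      have ha : a ≠ v := by rintro rfl; exact h4 (by simp [Inc, hab])
      have hb : b ≠ v := by rintro rfl; exact h4 (by simp [Inc, hab])
      rw [Function.update_of_ne ha, Function.update_of_ne hb]
      exact h3 a b hab
  obtain ⟨e₁, e₂, e₃, m₁, m₂, m₃, n₁₂, n₁₃, n₂₃⟩ := Finset.two_lt_card_iff.1 hcard
  obtain ⟨m₁, i₁⟩ := Finset.mem_filter.1 m₁
  obtain ⟨m₂, i₂⟩ := Finset.mem_filter.1 m₂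
  obtain ⟨m₃, i₃⟩ := Finset.mem_filter.1 m₃
  obtain ⟨a₁, k₁⟩ := exists_other i₁
  obtain ⟨a₂, k₂⟩ := exists_other i₂
  obtain ⟨a₃, k₃⟩ := exists_other i₃
  obtain ⟨e, he, a, hea, p₀, hp₀, hpv₀, hpa₀⟩ :=
    special h2 hI₁ m₁ m₂ m₃ n₁₂ n₁₃ n₂₃ k₁ k₂ k₃
  -- restrict to the component of `a`
  obtain ⟨p, hp, hpv, hpa, hpr⟩ : ∃ p, Sol G π (B₁.erase e) p ∧ p v = ⊤ ∧ p a ≠ ⊤ ∧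
      ∀ x, p x ≠ ⊤ → G.Reach (B₁.erase e) a x := by
    refine ⟨_, hp₀.glue (fun e _ => sat_top e) (reach_resp (B₁.erase e) a), ?_, ?_, ?_⟩
    · simp [hpv₀]
    · have : G.Reach (B₁.erase e) a a := Relation.ReflTransGen.refl
      simpa [this] using hpa₀
    · intro x hx
      by_contra hr
      simp [hr] at hx
  have hav : a ≠ v := by rintro rfl; exact hpa hpv
  have c1 := (sat_iff h2 hea).1 (claim e he (by simp [Inc, hea]) p hp)
  rw [Function.update_self, Function.update_of_ne hav] at c1
  have hpu : p u ≠ ⊤ := by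
    intro h; rw [h] at c1; simp at c1
    exact absurd c1.symm (by simp [hpa])
  have hru := hpr u hpu
  obtain ⟨e', he', hne, hinc⟩ : ∃ e' ∈ B₁, e' ≠ e ∧ G.Inc e' v := by
    by_cases h : e₁ = e
    · exact ⟨e₂, m₂, fun h' => n₁₂ (h.trans h'.symm), i₂⟩
    · exact ⟨e₁, m₁, h, i₁⟩
  have hne' := hI₁ e' he'
  unfold Cl at hne'
  push Not at hne'
  obtain ⟨p₂, hp₂, hpe₂⟩ := hne'
  have rel : ∀ x, G.Reach (B₁.erase e) a x → p x ≠ ⊤ ∧ p₂ x + p a = p₂ a + p x := by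
    intro x hx
    refine ⟨hp.resp.reach hx hpa, ?_⟩
    induction hx with
    | refl => rfl
    | @tail y z hy h ih =>
      obtain ⟨h, hh, h1, h3⟩ := h
      obtain ⟨b, hab⟩ := exists_other h3
      have hz : p z ≠ ⊤ := hp.resp.reach (hy.tail ⟨h, hh, h1, h3⟩) hpa
      have hhe : h ≠ e' := by
        rintro rfl
        exact hz (((hp h hh).top_iff h3 hinc).2 hpv)
      have w1 := hp h hh _ _ hab
      have w2 := hp₂ h (Finset.mem_erase.2 ⟨hhe, (Finset.mem_erase.1 hh).2⟩) _ _ hab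
      rcases (inc_iff hab).1 h1 with rfl | rfl
      · exact ih
      · rw [w1, w2, add_right_comm, ih, add_assoc]
  have hr := (rel u hru).2
  have hv₂ := hp₂ e (Finset.mem_erase.2 ⟨hne.symm, he⟩) v a hea
  have hfin : p₂ u + (π g : WithTop Q) = p₂ v := by
    have : p₂ u + (π g : WithTop Q) + p a = p₂ v + p a := by
      rw [add_right_comm, hr, hv₂, add_assoc, c1]; ac_rfl
    exact (WithTop.add_right_inj hpa).1 this
  have := claim e' he' hinc p₂ hp₂
  rw [hfin, Function.update_eq_self] at this
  exact hpe₂ this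

end Gain

section Cycle

variable {V E : Type*} [DecidableEq E] {G : Multigraph V E} {Q : Type*} [AddCommGroup Q]
  {π : E → Q}

theorem mult_eq {e : E} {a b : V} (h : G.ends e = s(a, b)) (w : V) :
    G.mult e w = (if w = a then 1 else 0) + (if w = b then 1 else 0) := by
  unfold Multigraph.mult
  rw [h]
  by_cases h1 : w = a <;> by_cases h2 : w = b
  · subst h1; subst h2; simp [Sym2.diag]
  · subst h1; simp [Sym2.diag, h2]; exact fun h => h2 h.symm
  · subst h2; simp [Sym2.diag, h1]; exact fun h => h1 h.symm
  · simp [Sym2.diag, h1, h2]; exact fun h => absurd h.symm h1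

theorem handshake (h2 : ∀ q : Q, q + q = 0) {C : Finset E} (hC : ∀ w, Even (G.deg C w))
    (a b : E → V) (hab : ∀ e, G.ends e = s(a e, b e)) (p : V → Q) :
    ∑ e ∈ C, (p (a e) + p (b e)) = 0 := by
  have h1 : ∀ e ∈ C, p (a e) + p (b e) = ∑ w ∈ C.image a ∪ C.image b, G.mult e w • p w := by
    intro e he
    have ha : a e ∈ C.image a ∪ C.image b :=
      Finset.mem_union_left _ (Finset.mem_image_of_mem _ he)
    have hb : b e ∈ C.image a ∪ C.image b :=
      Finset.mem_union_right _ (Finset.mem_image_of_mem _ he)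
    simp only [mult_eq (hab e), add_smul, Finset.sum_add_distrib, ite_smul, one_smul, zero_smul]
    rw [Finset.sum_ite_eq', Finset.sum_ite_eq']
    simp only [ha, hb, if_true]
  rw [Finset.sum_congr rfl h1, Finset.sum_comm]
  apply Finset.sum_eq_zero
  intro w _
  rw [← Finset.sum_smul]
  obtain ⟨k, hk⟩ := hC w
  change (G.deg C w) • p w = 0
  rw [hk, add_smul, h2]

theorem cycle_even {C : Finset E} (hC : G.IsCycle C) (w : V) : Even (G.deg C w) := by
  rcases hC.2.2 w with h | h <;> simp [h]

theorem cycle_resp {C : Finset E} (hC : G.IsCycle C) {e : E} (he : e ∈ C) {F : V → Prop}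
    (hF : Resp G (C.erase e) F) : Resp G C F := by
  choose a b hab using exists_ends (G := G)
  have hs := handshake (Q := ZMod 2) (by decide) (cycle_even hC) a b hab
    (fun x => if F x then 1 else 0)
  rw [← Finset.add_sum_erase _ _ he, Finset.sum_eq_zero, add_zero] at hs
  · have key : F (a e) ↔ F (b e) := by
      by_cases h1 : F (a e) <;> by_cases h3 : F (b e) <;> simp [h1, h3] at hs ⊢
    intro f hf
    by_cases hfe : f = e
    · subst hfe
      intro x y hx hy hFx
      rcases (inc_iff (hab f)).1 hx with rfl | rfl <;>
      rcases (inc_iff (hab f)).1 hy with rfl | rfl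
      · exact hFx
      · exact key.1 hFx
      · exact key.2 hFx
      · exact hFx
    · exact hF f (Finset.mem_erase.2 ⟨hfe, hf⟩)
  · intro f hf
    have ha : G.Inc f (a f) := (inc_iff (hab f)).2 (Or.inl rfl)
    have hb : G.Inc f (b f) := (inc_iff (hab f)).2 (Or.inr rfl)
    have h1 := hF f hf _ _ ha hb
    have h3 := hF f hf _ _ hb ha
    have : F (a f) ↔ F (b f) := ⟨h1, h3⟩
    by_cases h : F (a f)
    · simp only [h, this.1 h, if_true]; decide
    · have h' : ¬ F (b f) := fun h' => h (this.2 h')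
      simp [h, h']

theorem conn_resp {A : Finset E} {F : V → Prop} (hF : Resp G A F) {e f : E}
    (h : Relation.ReflTransGen (G.AdjIn A) e f) {x : V} (hx : G.Inc e x)
    (he : e ∈ A) (hFx : F x) : ∀ y, G.Inc f y → F y := by
  induction h with
  | refl => intro y hy; exact hF e he x y hx hy hFx
  | tail _ h ih =>
    obtain ⟨h1, h3, w, h4, h5⟩ := h
    intro y hy
    exact hF _ h3 w y h5 hy (ih w h4)

theorem conn_of_reach {A : Finset E} {x y : V} (h : G.Reach A x y) {e : E} (he : e ∈ A)
    (hx : G.Inc e x) : ∀ f ∈ A, G.Inc f y → Relation.ReflTransGen (G.AdjIn A) e f := by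
  induction h with
  | refl => intro f hf hy; exact Relation.ReflTransGen.single ⟨he, hf, x, hx, hy⟩
  | @tail z w _ h ih =>
    obtain ⟨g, hg, h1, h3⟩ := h
    intro f hf hy
    exact (ih g hg h1).tail ⟨hg, hf, w, h3, hy⟩

theorem conn_mono {A B : Finset E} (hAB : A ⊆ B) {e f : E}
    (h : Relation.ReflTransGen (G.AdjIn A) e f) : Relation.ReflTransGen (G.AdjIn B) e f := by
  induction h with
  | refl => exact Relation.ReflTransGen.refl
  | tail _ h ih => exact ih.tail ⟨hAB h.1, hAB h.2.1, h.2.2⟩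

theorem conn_symm {A : Finset E} {e f : E}
    (h : Relation.ReflTransGen (G.AdjIn A) e f) : Relation.ReflTransGen (G.AdjIn A) f e := by
  induction h with
  | refl => exact Relation.ReflTransGen.refl
  | tail _ h ih =>
    obtain ⟨h1, h3, w, h4, h5⟩ := h
    exact Relation.ReflTransGen.head ⟨h3, h1, w, h5, h4⟩ ih

/-- On a cycle, a finite potential satisfying all but one edge. -/
theorem cycle_sat (h2 : ∀ q : Q, q + q = 0) {C : Finset E} (hC : G.IsCycle C) {e : E}
    (he : e ∈ C) {p : V → WithTop Q} (hp : Sol G π (C.erase e) p)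
    (hfin : ∀ f ∈ C, ∀ x, G.Inc f x → p x ≠ ⊤) : Sat G π p e ↔ ∑ f ∈ C, π f = 0 := by
  choose a b hab using exists_ends (G := G)
  have neg : ∀ q : Q, -q = q := fun q => neg_eq_of_add_eq_zero_left (h2 q)
  have hs := handshake h2 (cycle_even hC) a b hab (fun x => (p x).untopD 0)
  have hval : ∀ f ∈ C, (Sat G π p f ↔
      (p (a f)).untopD 0 + (p (b f)).untopD 0 + π f = 0) := by
    intro f hf
    have ha := hfin f hf (a f) ((inc_iff (hab f)).2 (Or.inl rfl))
    have hb := hfin f hf (b f) ((inc_iff (hab f)).2 (Or.inr rfl))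
    rw [sat_iff h2 (hab f)]
    obtain ⟨x, hx⟩ := WithTop.ne_top_iff_exists.1 ha
    obtain ⟨y, hy⟩ := WithTop.ne_top_iff_exists.1 hb
    rw [← hx, ← hy, ← WithTop.coe_add, WithTop.coe_inj]
    simp only [WithTop.untopD_coe]
    rw [add_assoc, add_eq_zero_iff_eq_neg, neg]
  have hsum : ∑ f ∈ C, ((p (a f)).untopD 0 + (p (b f)).untopD 0 + π f) = ∑ f ∈ C, π f := by
    rw [Finset.sum_add_distrib, hs, zero_add]
  rw [hval e he, ← hsum, ← Finset.add_sum_erase _ _ he, Finset.sum_eq_zero, add_zero]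
  intro f hf
  exact (hval f (Finset.mem_of_mem_erase hf)).1 (hp f hf)

theorem path_aux {A : Finset E} {S : SimpleGraph V}
    (hS : ∀ x y, S.Adj x y → ∃ e ∈ A, G.ends e = s(x, y)) {u t : V} (w : S.Walk u t)
    (hw : w.IsPath) : ∃ P ⊆ A,
      (∀ x, G.deg P x + (if x = u then 1 else 0) + (if x = t then 1 else 0) =
        if x ∈ w.support then 2 else 0) ∧
      (∀ x ∈ w.support, G.Reach P u x) ∧ (∀ e ∈ P, ∀ x, G.Inc e x → x ∈ w.support) := by
  induction w with
  | nil =>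
    refine ⟨∅, by simp, ?_, ?_, by simp⟩
    · intro x
      simp only [Multigraph.deg, Finset.sum_empty, SimpleGraph.Walk.support_nil,
        List.mem_singleton]
      split_ifs <;> rfl
    · intro x hx
      simp at hx
      subst hx
      exact Relation.ReflTransGen.refl
  | @cons u y t h w ih =>
    rw [SimpleGraph.Walk.cons_isPath_iff] at hw
    obtain ⟨P, hPA, hdeg, hreach, hinc⟩ := ih hw.1
    obtain ⟨e, heA, he⟩ := hS _ _ h
    have hu : u ∉ w.support := hw.2
    have heP : e ∉ P := fun h' => hu (hinc e h' u ((inc_iff he).2 (Or.inl rfl)))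
    refine ⟨insert e P, ?_, ?_, ?_, ?_⟩
    · intro f hf
      rcases Finset.mem_insert.1 hf with rfl | hf
      · exact heA
      · exact hPA hf
    · intro x
      have h1 := hdeg x
      have h3 : G.deg (insert e P) x = G.mult e x + G.deg P x := by
        unfold Multigraph.deg; rw [Finset.sum_insert heP]
      rw [h3, mult_eq he]
      simp only [SimpleGraph.Walk.support_cons, List.mem_cons]
      by_cases hxu : x = u
      · subst hxu
        simp only [hu, if_false] at h1
        simp only [true_or, if_true]
        omega
      · simp only [hxu, false_or, if_false]
        omega
    · intro x hx
      rw [SimpleGraph.Walk.support_cons, List.mem_cons] at hx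
      rcases hx with rfl | hx
      · exact Relation.ReflTransGen.refl
      · exact Relation.ReflTransGen.head ⟨e, Finset.mem_insert_self _ _,
          (inc_iff he).2 (Or.inl rfl), (inc_iff he).2 (Or.inr rfl)⟩
          (Reach.mono' (Finset.subset_insert _ _) (hreach x hx))
    · intro f hf x hx
      rw [SimpleGraph.Walk.support_cons, List.mem_cons]
      rcases Finset.mem_insert.1 hf with rfl | hf
      · rcases (inc_iff he).1 hx with rfl | rfl
        · exact Or.inl rfl
        · exact Or.inr (SimpleGraph.Walk.start_mem_support w)
      · exact Or.inr (hinc f hf x hx)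

theorem exists_cycle {A : Finset E} {e : E} (heA : e ∉ A) {a b : V} (hab : G.ends e = s(a, b))
    (h : G.Reach A a b) : ∃ C ⊆ insert e A, e ∈ C ∧ G.IsCycle C := by
  let S : SimpleGraph V := SimpleGraph.fromRel (fun x y => ∃ e ∈ A, G.Inc e x ∧ G.Inc e y)
  have hS : ∀ x y, S.Adj x y → ∃ e ∈ A, G.ends e = s(x, y) := by
    intro x y hxy
    rw [SimpleGraph.fromRel_adj] at hxy
    obtain ⟨hne, h⟩ := hxy
    obtain ⟨f, hf, hx, hy⟩ : ∃ e ∈ A, G.Inc e x ∧ G.Inc e y := by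
      rcases h with h | ⟨f, hf, hx, hy⟩
      · exact h
      · exact ⟨f, hf, hy, hx⟩
    obtain ⟨c, hc⟩ := exists_other hx
    rcases (inc_iff hc).1 hy with rfl | rfl
    · exact absurd rfl hne
    · exact ⟨f, hf, hc⟩
  have hr : S.Reachable a b := by
    have aux : ∀ y, G.Reach A a y → S.Reachable a y := by
      intro y hy
      induction hy with
      | refl => exact SimpleGraph.Reachable.refl _
      | @tail y z _ h ih =>
        by_cases hyz : y = z
        · exact hyz ▸ ih
        · refine ih.trans (SimpleGraph.Adj.reachable ?_)
          rw [SimpleGraph.fromRel_adj]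
          exact ⟨hyz, Or.inl h⟩
    exact aux b h
  obtain ⟨w, hw⟩ := hr.exists_isPath
  obtain ⟨P, hPA, hdeg, hreach, hinc⟩ := path_aux hS w hw
  have heP : e ∉ P := fun h => heA (hPA h)
  have hia : G.Inc e a := (inc_iff hab).2 (Or.inl rfl)
  have hib : G.Inc e b := (inc_iff hab).2 (Or.inr rfl)
  refine ⟨insert e P, Finset.insert_subset_insert _ hPA, Finset.mem_insert_self _ _,
    ⟨e, Finset.mem_insert_self _ _⟩, ?_, ?_⟩
  · have hr' : ∀ f ∈ insert e P, ∃ x, G.Inc f x ∧ G.Reach (insert e P) a x := by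
      intro f hf
      rcases Finset.mem_insert.1 hf with rfl | hf
      · exact ⟨a, hia, Relation.ReflTransGen.refl⟩
      · obtain ⟨x, y, hxy⟩ := exists_ends (G := G) f
        have hx : G.Inc f x := (inc_iff hxy).2 (Or.inl rfl)
        exact ⟨x, hx, Reach.mono' (Finset.subset_insert _ _) (hreach x (hinc f hf x hx))⟩
    intro f hf f' hf'
    obtain ⟨x, hx, hrx⟩ := hr' f hf
    obtain ⟨y, hy, hry⟩ := hr' f' hf'
    exact conn_of_reach (Relation.ReflTransGen.trans (Reach.symm' hrx) hry) hf hx f' hf' hy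
  · intro x
    have h1 := hdeg x
    have h3 : G.deg (insert e P) x = G.mult e x + G.deg P x := by
      unfold Multigraph.deg; rw [Finset.sum_insert heP]
    rw [h3, mult_eq hab]
    split_ifs at h1 ⊢ <;> omega

/-- Every vertex has a finite potential or a cycle in its component. -/
theorem potential_or_cycle (h2 : ∀ q : Q, q + q = 0) (A : Finset E) : ∀ x : V,
    (∃ p, Sol G π A p ∧ p x ≠ ⊤) ∨
      ∃ C ⊆ A, G.IsCycle C ∧ ∃ h ∈ C, ∃ y, G.Inc h y ∧ G.Reach A x y := by
  induction A using Finset.induction_on with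
  | empty =>
    intro x
    left
    exact ⟨fun _ => 0, by simp [Sol], by simp⟩
  | insert e A heA ih =>
    have hsub : A ⊆ insert e A := Finset.subset_insert _ _
    have lift : ∀ x z, G.Reach (insert e A) x z →
        (∃ C ⊆ A, G.IsCycle C ∧ ∃ h ∈ C, ∃ y, G.Inc h y ∧ G.Reach A z y) →
        ∃ C ⊆ insert e A, G.IsCycle C ∧ ∃ h ∈ C, ∃ y, G.Inc h y ∧ G.Reach (insert e A) x y := by
      rintro x z hxz ⟨C, hCA, hC, h, hh, y, hy, hr⟩
      exact ⟨C, hCA.trans hsub, hC, h, hh, y, hy, Relation.ReflTransGen.trans hxz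
        (Reach.mono' hsub hr)⟩
    have htop : Sol G π A (fun _ => ⊤) := fun e _ => sat_top e
    have main : ∀ a b, G.ends e = s(a, b) → ∀ x, G.Reach A x a →
        (∃ p, Sol G π (insert e A) p ∧ p x ≠ ⊤) ∨ ∃ C ⊆ insert e A, G.IsCycle C ∧
          ∃ h ∈ C, ∃ y, G.Inc h y ∧ G.Reach (insert e A) x y := by
      intro a b hab x hxa
      have hia : G.Inc e a := (inc_iff hab).2 (Or.inl rfl)
      have hib : G.Inc e b := (inc_iff hab).2 (Or.inr rfl)
      rcases ih x with ⟨p, hp, hpx⟩ | hc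
      · by_cases hreach : G.Reach A a b
        · obtain ⟨C, hCA, heC, hC⟩ := exists_cycle heA hab hreach
          exact Or.inr ⟨C, hCA, hC, e, heC, a, hia, Reach.mono' hsub hxa⟩
        · rcases ih b with ⟨q, hq, hqb⟩ | hc
          · left
            have hpa := hp.resp.reach hxa hpx
            obtain ⟨t, ht⟩ : ∃ t : Q, q b + (t : WithTop Q) = p a + (π e : WithTop Q) := by
              obtain ⟨x, hx⟩ := WithTop.ne_top_iff_exists.1 hqb
              obtain ⟨y, hy⟩ := WithTop.ne_top_iff_exists.1 hpa
              refine ⟨-x + (y + π e), ?_⟩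
              rw [← hx, ← hy, ← WithTop.coe_add, ← WithTop.coe_add]; simp
            have hr := Sol.glue hp (Sol.glue (fun e he => (hq e he).shift (t : WithTop Q)) htop
              (reach_resp A b)) (reach_resp A a)
            refine ⟨fun x => if G.Reach A a x then p x else
              if G.Reach A b x then q x + (t : WithTop Q) else ⊤, ?_, ?_⟩
            · intro f hf
              rcases Finset.mem_insert.1 hf with rfl | hf
              · rw [sat_iff h2 hab]
                · have hc : G.Reach A a a := Relation.ReflTransGen.refl
                  have hd : G.Reach A b b := Relation.ReflTransGen.refl
                  simp only [hc, hd, hreach, if_true, if_false, ht]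
                  rw [add_twice h2]
              · exact hr f hf
            · simp only [Reach.symm' hxa, if_true]; exact hpx
          · right
            refine lift x b ?_ hc
            exact (Reach.mono' hsub hxa).tail ⟨e, Finset.mem_insert_self _ _, hia, hib⟩
      · right
        exact lift x x Relation.ReflTransGen.refl hc
    intro x
    obtain ⟨a, b, hab⟩ := exists_ends (G := G) e
    by_cases ha : G.Reach A x a
    · exact main a b hab x ha
    by_cases hb : G.Reach A x b
    · exact main b a (by rw [hab, Sym2.eq_swap]) x hb
    rcases ih x with ⟨p, hp, hpx⟩ | hc
    · left
      have hr := Sol.glue hp htop (reach_resp A x)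
      refine ⟨fun y => if G.Reach A x y then p y else ⊤, ?_, ?_⟩
      · intro f hf
        rcases Finset.mem_insert.1 hf with rfl | hf
        · rw [sat_iff h2 hab]
          simp [ha, hb]
        · exact hr f hf
      · have hc : G.Reach A x x := Relation.ReflTransGen.refl
        simpa [hc] using hpx
    · right
      exact lift x x Relation.ReflTransGen.refl hc

end Cycle

section Frame

variable {V E : Type*} [DecidableEq E] (Ω : LinearBiasedGraph V E) {Q : Type*} [AddCommGroup Q]
  {π : E → Q}

theorem frameIndep_of_ind (h2 : ∀ q : Q, q + q = 0)
    (hπ : ∀ C, Ω.G.IsCycle C → (C ∈ Ω.Bal ↔ ∑ f ∈ C, π f = 0))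
    {A : Finset E} (hA : Ind Ω.G π A) : Ω.FrameIndep A := by
  have first : ∀ C ⊆ A, Ω.G.IsCycle C → C ∉ Ω.Bal := by
    intro C hCA hC hbal
    obtain ⟨e, he⟩ := hC.1
    apply hA e (hCA he)
    intro p hp
    have hp' : Sol Ω.G π (C.erase e) p := hp.mono (Finset.erase_subset_erase _ hCA)
    have hresp := cycle_resp hC he hp'.resp
    obtain ⟨a, b, hab⟩ := exists_ends (G := Ω.G) e
    have hia : Ω.G.Inc e a := (inc_iff hab).2 (Or.inl rfl)
    have hib : Ω.G.Inc e b := (inc_iff hab).2 (Or.inr rfl)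
    by_cases hpa : p a = ⊤
    · have hpb : p b = ⊤ := by
        by_contra h
        exact hresp e he b a hib hia h hpa
      rw [sat_iff h2 hab, hpa, hpb]; simp
    · exact (cycle_sat h2 hC he hp' (fun f hf => conn_resp hresp (hC.2.1 e he f hf) hia he hpa)).2
        ((hπ C hC).1 hbal)
  refine ⟨first, ?_⟩
  · have main : ∀ C₁ C₂ : Finset E, C₁ ⊆ A → C₂ ⊆ A → Ω.G.IsCycle C₁ → Ω.G.IsCycle C₂ →
        (∀ C ⊆ A, Ω.G.IsCycle C → C ∉ Ω.Bal) →
        ∀ e ∈ C₁, e ∉ C₂ → ∀ e₂ ∈ C₂, ¬ Relation.ReflTransGen (Ω.G.AdjIn A) e e₂ := by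
      intro C₁ C₂ h₁ h₂ hC₁ hC₂ hnb e he hne e₂ he₂ hconn
      apply hA e (h₁ he)
      intro p hp
      have hp' : Sol Ω.G π (C₁.erase e) p := hp.mono (Finset.erase_subset_erase _ h₁)
      have hp₂ : Sol Ω.G π C₂ p := hp.mono (fun x hx =>
        Finset.mem_erase.2 ⟨fun h => hne (h ▸ hx), h₂ hx⟩)
      have hresp := cycle_resp hC₁ he hp'.resp
      have hrespA : Resp Ω.G A (fun x => p x ≠ ⊤) := by
        intro f hf
        by_cases hfe : f = e
        · subst hfe; exact hresp f he
        · exact hp.resp f (Finset.mem_erase.2 ⟨hfe, hf⟩)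
      obtain ⟨a, b, hab⟩ := exists_ends (G := Ω.G) e
      have hia : Ω.G.Inc e a := (inc_iff hab).2 (Or.inl rfl)
      have hib : Ω.G.Inc e b := (inc_iff hab).2 (Or.inr rfl)
      by_cases hpa : p a = ⊤
      · have hpb : p b = ⊤ := by
          by_contra h
          exact hresp e he b a hib hia h hpa
        rw [sat_iff h2 hab, hpa, hpb]; simp
      · exfalso
        have h3 := conn_resp hrespA hconn hia (h₁ he) hpa
        obtain ⟨c, d, hcd⟩ := exists_ends (G := Ω.G) e₂
        have hic : Ω.G.Inc e₂ c := (inc_iff hcd).2 (Or.inl rfl)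
        have h4 := h3 c hic
        have h5 := (cycle_sat h2 hC₂ he₂ (hp₂.mono (Finset.erase_subset _ _))
          (fun f hf => conn_resp hp₂.resp (hC₂.2.1 e₂ he₂ f hf) hic he₂ h4)).1 (hp₂ e₂ he₂)
        exact hnb C₂ h₂ hC₂ ((hπ C₂ hC₂).2 h5)
    have hnb : ∀ C ⊆ A, Ω.G.IsCycle C → C ∉ Ω.Bal := first
    intro C₁ C₂ h₁ h₂ hC₁ hC₂ hne e₁ he₁ e₂ he₂ hconn
    by_cases hsub : C₁ ⊆ C₂
    · have : ¬ C₂ ⊆ C₁ := fun h => hne (Finset.Subset.antisymm hsub h)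
      obtain ⟨e, he, hne'⟩ := Finset.not_subset.1 this
      refine main C₂ C₁ h₂ h₁ hC₂ hC₁ hnb e he hne' e₁ he₁ ?_
      exact Relation.ReflTransGen.trans (conn_mono h₂ (hC₂.2.1 e he e₂ he₂)) (conn_symm hconn)
    · obtain ⟨e, he, hne'⟩ := Finset.not_subset.1 hsub
      refine main C₁ C₂ h₁ h₂ hC₁ hC₂ hnb e he hne' e₂ he₂ ?_
      exact Relation.ReflTransGen.trans (conn_mono h₁ (hC₁.2.1 e he e₁ he₁)) hconn

theorem ind_of_frameIndep (h2 : ∀ q : Q, q + q = 0)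
    (hπ : ∀ C, Ω.G.IsCycle C → (C ∈ Ω.Bal ↔ ∑ f ∈ C, π f = 0))
    {A : Finset E} (hA : Ω.FrameIndep A) : Ind Ω.G π A := by
  intro e he hcl
  obtain ⟨a, b, hab⟩ := exists_ends (G := Ω.G) e
  have hia : Ω.G.Inc e a := (inc_iff hab).2 (Or.inl rfl)
  have hib : Ω.G.Inc e b := (inc_iff hab).2 (Or.inr rfl)
  have hsub : A.erase e ⊆ A := Finset.erase_subset _ _
  have htop : Sol Ω.G π (A.erase e) (fun _ => ⊤) := fun e _ => sat_top e
  by_cases hr : Ω.G.Reach (A.erase e) a b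
  · obtain ⟨C, hCA, heC, hC⟩ := exists_cycle (Finset.notMem_erase e A) hab hr
    rw [Finset.insert_erase he] at hCA
    rcases potential_or_cycle (G := Ω.G) (π := π) h2 (A.erase e) a with
      ⟨p, hp, hpa⟩ | ⟨C', hCA', hC', h, hh, y, hy, hry⟩
    · have hpC : Sol Ω.G π C p := by
        intro f hf
        by_cases hfe : f = e
        · subst hfe; exact hcl p hp
        · exact hp f (Finset.mem_erase.2 ⟨hfe, hCA hf⟩)
      have := (cycle_sat h2 hC heC (hpC.mono (Finset.erase_subset _ _))
        (fun f hf => conn_resp hpC.resp (hC.2.1 e heC f hf) hia heC hpa)).1 (hpC e heC)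
      exact hA.1 C hCA hC ((hπ C hC).2 this)
    · have hne : C ≠ C' := by
        rintro rfl
        exact Finset.notMem_erase e A (hCA' heC)
      exact hA.2 C C' hCA (hCA'.trans hsub) hC hC' hne e heC h hh
        (conn_of_reach (Reach.mono' hsub hry) he hia h (hsub (hCA' hh)) hy)
  · have cyc : ∀ c d, Ω.G.ends e = s(c, d) → ¬ Ω.G.Reach (A.erase e) c d →
        ∃ C ⊆ A.erase e, Ω.G.IsCycle C ∧ ∃ h ∈ C, ∃ y, Ω.G.Inc h y ∧
          Ω.G.Reach (A.erase e) c y := by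
      intro c d hcd hncd
      rcases potential_or_cycle (G := Ω.G) (π := π) h2 (A.erase e) c with ⟨p, hp, hpc⟩ | h
      · exfalso
        have := hcl _ (hp.glue htop (reach_resp (A.erase e) c))
        rw [sat_iff h2 hcd] at this
        have hc : Ω.G.Reach (A.erase e) c c := Relation.ReflTransGen.refl
        simp only [hc, hncd, if_true, if_false] at this
        simp [hpc] at this
      · exact h
    obtain ⟨C, hCA, hC, h, hh, y, hy, hry⟩ := cyc a b hab hr
    obtain ⟨C', hCA', hC', h', hh', y', hy', hry'⟩ := cyc b a (by rw [hab, Sym2.eq_swap])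
      (fun h => hr (Reach.symm' h))
    have hne : C ≠ C' := by
      rintro rfl
      have h3 := conn_resp (reach_resp (G := Ω.G) (A.erase e) a)
        (conn_mono hCA (hC.2.1 h hh h' hh')) hy (hCA hh) hry y' hy'
      exact hr (Relation.ReflTransGen.trans h3 (Reach.symm' hry'))
    refine hA.2 C C' (hCA.trans hsub) (hCA'.trans hsub) hC hC' hne h hh h' hh' ?_
    have h3 : Ω.G.Reach A y y' :=
      Relation.ReflTransGen.trans ((Reach.mono' hsub (Reach.symm' hry)).tail ⟨e, he, hia, hib⟩)
        (Reach.mono' hsub hry')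
    exact conn_of_reach h3 (hsub (hCA hh)) hy h' (hsub (hCA' hh')) hy'

theorem frameBase_iff (h2 : ∀ q : Q, q + q = 0)
    (hπ : ∀ C, Ω.G.IsCycle C → (C ∈ Ω.Bal ↔ ∑ f ∈ C, π f = 0)) (B : Finset E) :
    Ω.FrameBase B ↔ Ind Ω.G π B ∧ ∀ x, Cl Ω.G π B x := by
  constructor
  · rintro ⟨hI, hmax⟩
    have hI' := ind_of_frameIndep Ω h2 hπ hI
    refine ⟨hI', fun x => ?_⟩
    by_contra hx
    have h1 := frameIndep_of_ind Ω h2 hπ (hI'.insert h2 hx)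
    have h3 := hmax _ h1 (Finset.subset_insert _ _)
    exact hx (Cl.of_mem (h3 ▸ Finset.mem_insert_self x B))
  · rintro ⟨hI, hS⟩
    refine ⟨frameIndep_of_ind Ω h2 hπ hI, fun A hA hBA => ?_⟩
    have hA' := ind_of_frameIndep Ω h2 hπ hA
    refine Finset.Subset.antisymm (fun x hx => ?_) hBA
    by_contra hxB
    exact hA' x hx ((hS x).mono (fun y hy =>
      Finset.mem_erase.2 ⟨fun h => hxB (h ▸ hy), hBA hy⟩))

/-- Indicator vector of a finite set over the field with two elements. -/
def ind2 (C : Finset E) : E → ZMod 2 := fun x => if x ∈ C then 1 else 0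

theorem ind2_symmDiff (C D : Finset E) : ind2 (C ∆ D) = ind2 C + ind2 D := by
  funext x
  simp only [ind2, Pi.add_apply, Finset.mem_symmDiff]
  by_cases h1 : x ∈ C <;> by_cases h3 : x ∈ D <;> simp [h1, h3]
  decide

theorem ind2_inj {C D : Finset E} (h : ind2 C = ind2 D) : C = D := by
  ext x
  have := congrFun h x
  simp only [ind2] at this
  by_cases h1 : x ∈ C <;> by_cases h3 : x ∈ D <;> simp [h1, h3] at this ⊢

theorem listSymmDiff_append (L M : List (Finset E)) :
    listSymmDiff (L ++ M) = listSymmDiff L ∆ listSymmDiff M := by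
  induction L with
  | nil =>
    ext x
    simp [listSymmDiff, Finset.mem_symmDiff]
  | cons a L ih =>
    have h1 : listSymmDiff (a :: L ++ M) = a ∆ listSymmDiff (L ++ M) := rfl
    have h3 : listSymmDiff (a :: L) = a ∆ listSymmDiff L := rfl
    rw [h1, h3, ih, symmDiff_assoc]

theorem exists_gain : ∃ (S : Submodule (ZMod 2) (E → ZMod 2)),
    ∀ C, Ω.G.IsCycle C → (C ∈ Ω.Bal ↔
      ∑ f ∈ C, (Submodule.Quotient.mk (p := S) (ind2 {f})) = 0) := by
  refine ⟨Submodule.span (ZMod 2) (ind2 '' Ω.Bal), fun C hC => ?_⟩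
  have hsum : ∑ f ∈ C, ind2 {f} = ind2 C := by
    funext x
    simp [ind2, Finset.sum_apply]
  have h1 : ∑ f ∈ C, (Submodule.Quotient.mk (p := Submodule.span (ZMod 2) (ind2 '' Ω.Bal))
      (ind2 {f})) = Submodule.Quotient.mk (ind2 C) := by
    rw [← hsum]
    exact (map_sum (Submodule.mkQ _) _ _).symm
  rw [h1, Submodule.Quotient.mk_eq_zero]
  constructor
  · intro h
    exact Submodule.subset_span ⟨C, h, rfl⟩
  · intro h
    have key : ∀ x ∈ Submodule.span (ZMod 2) (ind2 '' Ω.Bal),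
        ∃ L : List (Finset E), (∀ D ∈ L, D ∈ Ω.Bal) ∧ x = ind2 (listSymmDiff L) := by
      intro x hx
      induction hx using Submodule.span_induction with
      | mem x hx =>
        obtain ⟨D, hD, rfl⟩ := hx
        refine ⟨[D], by simpa using hD, ?_⟩
        congr 1
        ext x
        simp [listSymmDiff, Finset.mem_symmDiff]
      | zero => exact ⟨[], by simp, by funext x; simp [listSymmDiff, ind2]⟩
      | add x y _ _ hx hy =>
        obtain ⟨L, hL, rfl⟩ := hx
        obtain ⟨M, hM, rfl⟩ := hy
        refine ⟨L ++ M, ?_, by rw [listSymmDiff_append, ind2_symmDiff]⟩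
        intro D hD
        rcases List.mem_append.1 hD with h | h
        · exact hL D h
        · exact hM D h
      | smul c x _ hx =>
        obtain ⟨L, hL, rfl⟩ := hx
        have hc : c = 0 ∨ c = 1 := by revert c; decide
        rcases hc with rfl | rfl
        · exact ⟨[], by simp, by funext x; simp [listSymmDiff, ind2]⟩
        · exact ⟨L, hL, by simp⟩
    obtain ⟨L, hL, hx⟩ := key _ h
    exact Ω.linear L hL C hC (ind2_inj hx)

theorem step (h2 : ∀ q : Q, q + q = 0)
    (hπ : ∀ C, Ω.G.IsCycle C → (C ∈ Ω.Bal ↔ ∑ f ∈ C, π f = 0)) {B₁ B₂ : Finset E}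
    (hB₁ : Ω.FrameBase B₁) (hB₂ : Ω.FrameBase B₂) {v : V}
    (hcard : 3 ≤ (B₁.filter fun e => Ω.G.Inc e v).card) (hdeg : Ω.G.deg B₂ v ≤ 1) :
    ∃ e ∈ B₁, Ω.G.Inc e v ∧ ∃ f ∈ B₂, ¬ Ω.G.Inc f v ∧
      Ω.FrameBase (insert f (B₁ \ {e})) ∧ Ω.FrameBase (insert e (B₂ \ {f})) := by
  rw [frameBase_iff Ω h2 hπ] at hB₁ hB₂
  have hmult : ∀ f, Ω.G.Inc f v → 1 ≤ Ω.G.mult f v := by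
    intro f hf
    obtain ⟨a, ha⟩ := exists_other hf
    rw [mult_eq ha]; simp
  by_cases hg : ∃ g ∈ B₂, Ω.G.Inc g v
  · obtain ⟨g, hgB, hgv⟩ := hg
    obtain ⟨u, hu⟩ := exists_other hgv
    have hsum : Ω.G.mult g v + ∑ f ∈ B₂.erase g, Ω.G.mult f v ≤ 1 := by
      rw [Finset.add_sum_erase _ (fun f => Ω.G.mult f v) hgB]; exact hdeg
    have hg1 := hmult g hgv
    have huv : u ≠ v := by
      rintro rfl
      rw [mult_eq hu] at hsum
      simp at hsum
      omega
    have hoth : ∀ f ∈ B₂, f ≠ g → ¬ Ω.G.Inc f v := by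
      intro f hf hfg hfv
      have h1 := hmult f hfv
      have h3 := Finset.single_le_sum (f := fun f => Ω.G.mult f v) (fun _ _ => Nat.zero_le _)
        (Finset.mem_erase.2 ⟨hfg, hf⟩)
      omega
    obtain ⟨e, he, hev, f, hf, hfg, hn1, hn2⟩ :=
      key h2 hB₁.1 hB₂.1 hB₂.2 hcard hu huv hoth
    refine ⟨e, he, hev, f, hf, hoth f hf hfg, ?_, ?_⟩
    · rw [frameBase_iff Ω h2 hπ]
      exact base_exchange h2 hB₁.1 hB₁.2 he hn1
    · rw [frameBase_iff Ω h2 hπ]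
      exact base_exchange h2 hB₂.1 hB₂.2 hf hn2
  · exfalso
    push Not at hg
    obtain ⟨e₁, e₂, e₃, m₁, m₂, m₃, n₁₂, n₁₃, n₂₃⟩ := Finset.two_lt_card_iff.1 hcard
    obtain ⟨m₁, i₁⟩ := Finset.mem_filter.1 m₁
    obtain ⟨m₂, i₂⟩ := Finset.mem_filter.1 m₂
    obtain ⟨m₃, i₃⟩ := Finset.mem_filter.1 m₃
    obtain ⟨a₁, k₁⟩ := exists_other i₁
    obtain ⟨a₂, k₂⟩ := exists_other i₂
    obtain ⟨a₃, k₃⟩ := exists_other i₃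
    obtain ⟨e, he, a, hea, p, hp, hpv, hpa⟩ :=
      special h2 hB₁.1 m₁ m₂ m₃ n₁₂ n₁₃ n₂₃ k₁ k₂ k₃
    have hav : a ≠ v := by rintro rfl; exact hpa hpv
    have h1 := hB₂.2 e (fun x => if x = v then 0 else ⊤) (by
      intro f hf x y hxy
      have hx : x ≠ v := by
        rintro rfl; exact hg f hf ((inc_iff hxy).2 (Or.inl rfl))
      have hy : y ≠ v := by
        rintro rfl; exact hg f hf ((inc_iff hxy).2 (Or.inr rfl))
      simp [hx, hy])
    rw [sat_iff h2 hea] at h1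
    simp [hav] at h1

theorem reduce [Fintype E] (h2 : ∀ q : Q, q + q = 0)
    (hπ : ∀ C, Ω.G.IsCycle C → (C ∈ Ω.Bal ↔ ∑ f ∈ C, π f = 0)) (v : V) (κ : ℕ)
    (hdeg : Ω.G.deg Finset.univ v ≤ 2 * κ) (n : ℕ) : ∀ (𝓑 : Fin κ → Finset E)
    (_ : ∀ i, Ω.FrameBase (𝓑 i))
    (_ : ∀ i j : Fin κ, i ≠ j → Disjoint (𝓑 i) (𝓑 j))
    (_ : ∑ j, (((𝓑 j).filter fun e => Ω.G.Inc e v).card - 2) = n),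
    ∃ 𝓑' : Fin κ → Finset E, Ω.ExchReachable 𝓑 𝓑' ∧
      ∀ j : Fin κ, ((𝓑' j).filter fun e => Ω.G.Inc e v).card ≤ 2 := by
  induction n using Nat.strong_induction_on with
  | _ n ih =>
  intro 𝓑 hbase hdisj hn
  by_cases hall : ∀ j : Fin κ, ((𝓑 j).filter fun e => Ω.G.Inc e v).card ≤ 2
  · exact ⟨𝓑, Relation.ReflTransGen.refl, hall⟩
  push Not at hall
  obtain ⟨i, hi⟩ := hall
  have hcd : ∀ B : Finset E, (B.filter fun e => Ω.G.Inc e v).card ≤ Ω.G.deg B v := by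
    intro B
    unfold Multigraph.deg
    rw [Finset.card_eq_sum_ones, Finset.sum_filter]
    apply Finset.sum_le_sum
    intro f _
    split_ifs with hf
    · obtain ⟨a, ha⟩ := exists_other hf
      rw [mult_eq ha]; simp
    · exact Nat.zero_le _
  obtain ⟨j, hj⟩ : ∃ j, Ω.G.deg (𝓑 j) v ≤ 1 := by
    by_contra hcon
    push Not at hcon
    have h1 : ∑ j, Ω.G.deg (𝓑 j) v ≤ Ω.G.deg Finset.univ v := by
      unfold Multigraph.deg
      rw [← Finset.sum_biUnion (fun a _ b _ hab => hdisj a b hab)]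
      exact Finset.sum_le_sum_of_subset (Finset.subset_univ _)
    have h3 : ∑ _j : Fin κ, 2 < ∑ j, Ω.G.deg (𝓑 j) v :=
      Finset.sum_lt_sum (fun j _ => hcon j) ⟨i, Finset.mem_univ _, hi.trans_le (hcd _)⟩
    simp at h3
    omega
  have hij : i ≠ j := by
    rintro rfl
    have := hcd (𝓑 i)
    omega
  obtain ⟨e, he, hev, f, hf, hfv, hb1, hb2⟩ := step Ω h2 hπ (hbase i) (hbase j) hi hj
  have hej : e ∉ 𝓑 j := fun h => Finset.disjoint_left.1 (hdisj i j hij) he h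
  have hfi : f ∉ 𝓑 i := fun h => Finset.disjoint_left.1 (hdisj i j hij) h hf
  let 𝓑' : Fin κ → Finset E := fun t =>
    if t = i then insert f (𝓑 i \ {e}) else if t = j then insert e (𝓑 j \ {f}) else 𝓑 t
  have b1 : 𝓑' i = insert f (𝓑 i \ {e}) := by simp [𝓑']
  have b2 : 𝓑' j = insert e (𝓑 j \ {f}) := by simp [𝓑', hij.symm]
  have b3 : ∀ t, t ≠ i → t ≠ j → 𝓑' t = 𝓑 t := by intro t h1 h3; simp [𝓑', h1, h3]
  have hstep : Ω.SymExchStep 𝓑 𝓑' := ⟨i, j, hij, e, he, f, hf, hb1, hb2, b1, b2, b3⟩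
  have hbase' : ∀ t, Ω.FrameBase (𝓑' t) := by
    intro t
    by_cases h1 : t = i
    · subst h1; rw [b1]; exact hb1
    by_cases h3 : t = j
    · subst h3; rw [b2]; exact hb2
    rw [b3 t h1 h3]; exact hbase t
  have hmem : ∀ t x, x ∈ 𝓑' t → (x ∈ 𝓑 t ∧ (x = e → t ≠ i) ∧ (x = f → t ≠ j)) ∨
      (x = f ∧ t = i) ∨ (x = e ∧ t = j) := by
    intro t x hx
    by_cases h1 : t = i
    · subst h1; rw [b1] at hx
      simp only [Finset.mem_insert, Finset.mem_sdiff, Finset.mem_singleton] at hx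
      grind
    by_cases h3 : t = j
    · subst h3; rw [b2] at hx
      simp only [Finset.mem_insert, Finset.mem_sdiff, Finset.mem_singleton] at hx
      grind
    rw [b3 t h1 h3] at hx
    grind
  have huniq : ∀ s t x, x ∈ 𝓑 s → x ∈ 𝓑 t → s = t := by
    intro s t x hs ht
    by_contra h
    exact Finset.disjoint_left.1 (hdisj s t h) hs ht
  have hdisj' : ∀ s t : Fin κ, s ≠ t → Disjoint (𝓑' s) (𝓑' t) := by
    intro s t hst
    rw [Finset.disjoint_left]
    intro x hxs hxt
    have h1 := hmem s x hxs
    have h3 := hmem t x hxt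
    have := huniq s t x
    have := huniq s i x
    have := huniq s j x
    have := huniq t i x
    have := huniq t j x
    grind
  have c1 : ((𝓑' i).filter fun e => Ω.G.Inc e v).card + 1 =
      ((𝓑 i).filter fun e => Ω.G.Inc e v).card := by
    have : ((𝓑' i).filter fun e => Ω.G.Inc e v) =
        ((𝓑 i).filter fun e => Ω.G.Inc e v).erase e := by
      rw [b1]; ext x
      simp only [Finset.mem_insert, Finset.mem_sdiff, Finset.mem_singleton, Finset.mem_filter,
        Finset.mem_erase]
      grind
    rw [this, Finset.card_erase_add_one]
    exact Finset.mem_filter.2 ⟨he, hev⟩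
  have c2 : ((𝓑' j).filter fun e => Ω.G.Inc e v).card ≤ 2 := by
    have : ((𝓑' j).filter fun e => Ω.G.Inc e v) ⊆
        insert e ((𝓑 j).filter fun e => Ω.G.Inc e v) := by
      rw [b2]; intro x
      simp only [Finset.mem_insert, Finset.mem_sdiff, Finset.mem_singleton, Finset.mem_filter]
      grind
    have h1 := Finset.card_le_card this
    have h3 := Finset.card_insert_le e ((𝓑 j).filter fun e => Ω.G.Inc e v)
    have h4 := hcd (𝓑 j)
    omega
  have hlt : ∑ t, (((𝓑' t).filter fun e => Ω.G.Inc e v).card - 2) < n := by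
    rw [← hn]
    apply Finset.sum_lt_sum
    · intro t _
      by_cases h1 : t = i
      · subst h1; omega
      by_cases h3 : t = j
      · subst h3; omega
      rw [b3 t h1 h3]
    · exact ⟨i, Finset.mem_univ _, by omega⟩
  obtain ⟨𝓒, hr, hc⟩ := ih _ hlt 𝓑' hbase' hdisj' rfl
  exact ⟨𝓒, Relation.ReflTransGen.head hstep hr, hc⟩

end Frame

end VRed

/-- **v-reduction.**  Let `M` be the frame matroid of a linear biased graph, `v` a vertex of
degree at most `2κ`, and `𝓑 = (B₁,…,B_κ)` a sequence of pairwise disjoint bases partitioning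
the edge set.  Then by a sequence of symmetric exchanges `𝓑` can be transformed into a
sequence `𝓑'` in which every base contains at most two edges incident with `v`. -/
theorem exists_v_reduced {V E : Type*} [DecidableEq E] [Fintype E]
    (Ω : LinearBiasedGraph V E) (v : V) (κ : ℕ)
    (hdeg : Ω.G.deg Finset.univ v ≤ 2 * κ)
    (𝓑 : Fin κ → Finset E)
    (hbase : ∀ i, Ω.FrameBase (𝓑 i))
    (hdisj : ∀ i j : Fin κ, i ≠ j → Disjoint (𝓑 i) (𝓑 j))
    (hcover : ∀ e : E, ∃ i, e ∈ 𝓑 i) :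
    ∃ 𝓑' : Fin κ → Finset E, Ω.ExchReachable 𝓑 𝓑' ∧
      ∀ j : Fin κ, ((𝓑' j).filter fun e => Ω.G.Inc e v).card ≤ 2 := by
  obtain ⟨S, hS⟩ := VRed.exists_gain Ω
  have h2 : ∀ q : (E → ZMod 2) ⧸ S, q + q = 0 := by
    intro q
    have h : (2 : ZMod 2) • q = q + q := two_smul _ q
    rw [← h, show (2 : ZMod 2) = 0 from rfl, zero_smul]
  exact VRed.reduce Ω h2 hS v κ hdeg _ 𝓑 hbase hdisj rfl
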